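/- Let P be a non-signalling behaviour with two settings x,y ∈ {0,1} whose maximal absolute CHSH value satisfies S_max ≤ 2√2 (as holds for all quantum behaviours by Tsirelson's bound). Then the supremum of p ∈ [0,1] such that P = p·P_L + (1−p)·Q pointwise for some behaviour P_L admitting an LHV+FHV model and some behaviour Q is at least 2 − √2; moreover, if S_max = 2√2, this supremum equals exactly 2 − √2. -/

import Mathlib

open scoped BigOperators Classical
open Finset

noncomputable section

/-- The real value `±1` associated with a Boolean outcome. -/
def outVal (a : Bool) : ℝ := if a then 1 else -1

/-- A behaviour: nonnegative probabilities summing to one for every pair of settings. -/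
def IsBehaviour {M N : ℕ} (P : Bool → Bool → Fin M → Fin N → ℝ) : Prop :=
  (∀ a b x y, 0 ≤ P a b x y) ∧ (∀ x y, ∑ a, ∑ b, P a b x y = 1)

/-- The correlator `⟨ab⟩_{xy}`. -/
def corr {M N : ℕ} (P : Bool → Bool → Fin M → Fin N → ℝ) (x : Fin M) (y : Fin N) : ℝ :=
  ∑ a, ∑ b, outVal a * outVal b * P a b x y

/-- Non-signalling for a two-setting behaviour. -/
def NonSignalling (P : Bool → Bool → Fin 2 → Fin 2 → ℝ) : Prop :=
  (∀ a x y y', ∑ b, P a b x y = ∑ b, P a b x y') ∧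
  (∀ b y x x', ∑ a, P a b x y = ∑ a, P a b x' y)

def S1 (P : Bool → Bool → Fin 2 → Fin 2 → ℝ) : ℝ :=
  corr P 0 0 + corr P 0 1 + corr P 1 0 - corr P 1 1

def S2 (P : Bool → Bool → Fin 2 → Fin 2 → ℝ) : ℝ :=
  corr P 0 0 + corr P 0 1 - corr P 1 0 + corr P 1 1

def S3 (P : Bool → Bool → Fin 2 → Fin 2 → ℝ) : ℝ :=
  corr P 0 0 - corr P 0 1 + corr P 1 0 + corr P 1 1

def S4 (P : Bool → Bool → Fin 2 → Fin 2 → ℝ) : ℝ :=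
  -corr P 0 0 + corr P 0 1 + corr P 1 0 + corr P 1 1

/-- Maximal absolute value of the four CHSH expressions. -/
def Smax (P : Bool → Bool → Fin 2 → Fin 2 → ℝ) : ℝ :=
  max (max |S1 P| |S2 P|) (max |S3 P| |S4 P|)

/-- A behaviour admits an LHV+FHV model (is local-free). -/
def LocalFree {M N : ℕ} (P : Bool → Bool → Fin M → Fin N → ℝ) : Prop :=
  ∃ (n : ℕ) (q : Fin n → ℝ) (A : Bool → Fin M → Fin n → ℝ) (B : Bool → Fin N → Fin n → ℝ),
    (∀ l, 0 ≤ q l) ∧ (∑ l, q l = 1) ∧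
    (∀ a x l, 0 ≤ A a x l) ∧ (∀ x l, ∑ a, A a x l = 1) ∧
    (∀ b y l, 0 ≤ B b y l) ∧ (∀ y l, ∑ b, B b y l = 1) ∧
    (∀ a b x y, P a b x y = ∑ l, q l * A a x l * B b y l)

/-!
The local fraction is computed for every non-signalling `P`: it is `min 1 ((4 - Smax P) / 2)`.

The signed CHSH expressions `±S_i` are the biases `Σ_{x,y} s x y ⟨ab⟩_{xy}` of the XOR games
`a b = s x y` whose sign pattern `s` has an odd number of minus signs. Such a bias is at most `2` on
local behaviours and at most `4` on all behaviours, so a local weight `p` forces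
`Smax P ≤ 2 p + 4 (1 - p)`.

If `Smax P ≤ 2`, then `P` is local by Fine's theorem. Writing distributions of signs through their
moments, the joint law of Alice's two answers and one answer of Bob has only two free moments: the
correlator `τ` of Alice's answers, which both settings of Bob must share, and the third moment.
Admissible intervals for them intersect pairwise, by positivity of `P` and by CHSH.

If `Smax P ≥ 2` is attained by the pattern `s`, then `P` lies in the simplex spanned by the PR box
of `s` and the eight deterministic behaviours losing the game `s` at exactly one pair of settings:
a non-signalling behaviour is determined by the probabilities of its eight losing events, and each
of these events occurs in exactly one of the vertices. So the total weight of the deterministic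
vertices is the total losing probability of `P`, which is `(4 - Smax P) / 2`.
-/

@[simp] lemma outVal_true : outVal true = 1 := rfl

@[simp] lemma outVal_false : outVal false = -1 := by simp [outVal]

lemma abs_outVal (a : Bool) : |outVal a| = 1 := by
  cases a <;> simp

lemma outVal_xor (a b : Bool) : outVal (a ^^ b) = -(outVal a * outVal b) := by
  cases a <;> cases b <;> simp

lemma outVal_beq (a b : Bool) : outVal (a == b) = outVal a * outVal b := by
  cases a <;> cases b <;> simp

lemma exists_outVal_mul_eq_abs (u : ℝ) : ∃ a, outVal a * u = |u| := by
  rcases abs_choice u with h | h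
  · exact ⟨true, by simp [h]⟩
  · exact ⟨false, by simp [h]⟩

lemma exists_mem_stdSimplex_sum_mul_eq {𝕜 ι : Type*} [Field 𝕜] [LinearOrder 𝕜]
    [IsStrictOrderedRing 𝕜] [Fintype ι] [Nonempty ι] {w : ι → 𝕜} (hw : ∀ i, 0 ≤ w i) :
    ∃ q ∈ stdSimplex 𝕜 ι, ∀ i, (∑ j, w j) * q i = w i := by
  rcases (Finset.sum_nonneg fun j _ => hw j).eq_or_lt' with h | h
  · have hw0 : ∀ i, w i = 0 := fun i =>
      (Finset.sum_eq_zero_iff_of_nonneg fun j _ => hw j).1 h i (Finset.mem_univ i)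
    exact ⟨_, ite_eq_mem_stdSimplex 𝕜 (Classical.arbitrary ι), fun i => by rw [h, hw0, zero_mul]⟩
  · refine ⟨fun i => w i / ∑ j, w j, ⟨fun i => div_nonneg (hw i) h.le, ?_⟩,
      fun i => mul_div_cancel₀ _ h.ne'⟩
    rw [← Finset.sum_div, div_self h.ne']

section Models

variable {M N : ℕ} {Λ : Type*}

/-- Local response functions: for each setting `x` and hidden state `l`, a distribution of the
outcome. -/
def IsResponse (A : Bool → Fin M → Λ → ℝ) : Prop :=
  ∀ x l, (fun a => A a x l) ∈ stdSimplex ℝ Bool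

/-- The deterministic response function answering `f x l`. -/
def detResponse (f : Fin M → Λ → Bool) (a : Bool) (x : Fin M) (l : Λ) : ℝ :=
  if f x l = a then 1 else 0

lemma isResponse_detResponse (f : Fin M → Λ → Bool) : IsResponse (detResponse f) :=
  fun x l => ite_eq_mem_stdSimplex ℝ (f x l)

/-- The mean `±1` value of the outcome in the hidden state `l`. -/
def responseMean (A : Bool → Fin M → Λ → ℝ) (x : Fin M) (l : Λ) : ℝ :=
  ∑ a, outVal a * A a x l

lemma IsResponse.abs_responseMean_le_one {A : Bool → Fin M → Λ → ℝ} (hA : IsResponse A)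
    (x : Fin M) (l : Λ) : |responseMean A x l| ≤ 1 :=
  calc |responseMean A x l| ≤ ∑ a, |outVal a * A a x l| := Finset.abs_sum_le_sum_abs _ _
    _ = ∑ a, A a x l := by simp only [abs_mul, abs_outVal, one_mul, abs_of_nonneg ((hA x l).1 _)]
    _ = 1 := (hA x l).2

variable [Fintype Λ]

/-- The behaviour of the model with hidden states of weight `q` and response functions `A`, `B`. -/
def localBox (q : Λ → ℝ) (A : Bool → Fin M → Λ → ℝ) (B : Bool → Fin N → Λ → ℝ)
    (a b : Bool) (x : Fin M) (y : Fin N) : ℝ :=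
  ∑ l, q l * A a x l * B b y l

variable {q : Λ → ℝ} {A : Bool → Fin M → Λ → ℝ} {B : Bool → Fin N → Λ → ℝ}
  {P Q : Bool → Bool → Fin M → Fin N → ℝ}

lemma localFree_localBox (hq : q ∈ stdSimplex ℝ Λ) (hA : IsResponse A) (hB : IsResponse B) :
    LocalFree (localBox q A B) := by
  let e := (Fintype.equivFin Λ).symm
  refine ⟨Fintype.card Λ, fun i => q (e i), fun a x i => A a x (e i), fun b y i => B b y (e i),
    fun i => hq.1 _, ?_, fun a x i => (hA x _).1 a, fun x i => (hA x _).2,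
    fun b y i => (hB y _).1 b, fun y i => (hB y _).2, fun a b x y => ?_⟩
  · rw [Equiv.sum_comp e q, hq.2]
  · exact (Equiv.sum_comp e fun l => q l * A a x l * B b y l).symm

lemma LocalFree.exists_eq_localBox (h : LocalFree P) :
    ∃ (n : ℕ) (q : Fin n → ℝ) (A : Bool → Fin M → Fin n → ℝ) (B : Bool → Fin N → Fin n → ℝ),
      q ∈ stdSimplex ℝ (Fin n) ∧ IsResponse A ∧ IsResponse B ∧ P = localBox q A B := by
  obtain ⟨n, q, A, B, hq, hq1, hA, hA1, hB, hB1, h⟩ := h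
  exact ⟨n, q, A, B, ⟨hq, hq1⟩, fun x l => ⟨fun a => hA a x l, hA1 x l⟩,
    fun y l => ⟨fun b => hB b y l, hB1 y l⟩, by funext a b x y; exact h a b x y⟩

lemma sum_localBox_right (hB : IsResponse B) (a : Bool) (x : Fin M) (y : Fin N) :
    ∑ b, localBox q A B a b x y = ∑ l, q l * A a x l := by
  simp only [localBox]
  rw [Finset.sum_comm]
  exact Finset.sum_congr rfl fun l _ => by rw [← Finset.mul_sum, (hB y l).2, mul_one]

lemma sum_localBox_left (hA : IsResponse A) (b : Bool) (x : Fin M) (y : Fin N) :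
    ∑ a, localBox q A B a b x y = ∑ l, q l * B b y l := by
  simp only [localBox]
  rw [Finset.sum_comm]
  exact Finset.sum_congr rfl fun l _ => by
    rw [← Finset.sum_mul, ← Finset.mul_sum, (hA x l).2, mul_one]

lemma LocalFree.isBehaviour (h : LocalFree P) : IsBehaviour P := by
  obtain ⟨n, q, A, B, hq, hA, hB, rfl⟩ := h.exists_eq_localBox
  refine ⟨fun a b x y => Finset.sum_nonneg fun l _ =>
    mul_nonneg (mul_nonneg (hq.1 l) ((hA x l).1 a)) ((hB y l).1 b), fun x y => ?_⟩
  simp only [sum_localBox_right hB]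
  rw [Finset.sum_comm, ← hq.2]
  exact Finset.sum_congr rfl fun l _ => by rw [← Finset.mul_sum, (hA x l).2, mul_one]

lemma LocalFree.nonSignalling {P : Bool → Bool → Fin 2 → Fin 2 → ℝ} (h : LocalFree P) :
    NonSignalling P := by
  obtain ⟨n, q, A, B, -, hA, hB, rfl⟩ := h.exists_eq_localBox
  exact ⟨fun a x y y' => by simp only [sum_localBox_right hB],
    fun b y x x' => by simp only [sum_localBox_left hA]⟩

lemma localFree_of_joint (hq : q ∈ stdSimplex ℝ Λ) (hA : IsResponse A) {r : Fin N → Λ → Bool → ℝ}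
    (hr : ∀ y l b, 0 ≤ r y l b) (hrq : ∀ y l, ∑ b, r y l b = q l)
    (hP : ∀ a b x y, P a b x y = ∑ l, A a x l * r y l b) : LocalFree P := by
  choose B hB hBr using fun y l => exists_mem_stdSimplex_sum_mul_eq (hr y l)
  have hP' : P = localBox q A fun b y l => B y l b := by
    funext a b x y
    rw [hP]
    exact Finset.sum_congr rfl fun l _ => by rw [← hBr y l b, hrq]; ring
  exact hP' ▸ localFree_localBox hq hA hB

end Models

section XorGames

variable {M N : ℕ} {P : Bool → Bool → Fin M → Fin N → ℝ}

/-- The expression `Σ ± ⟨ab⟩_{xy}` with the signs `s`, where `false` encodes `-1`. Up to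
normalization, it is the bias of the XOR game won when `a b = s x y`. -/
def xorBias (s : Fin M → Fin N → Bool) (P : Bool → Bool → Fin M → Fin N → ℝ) : ℝ :=
  ∑ x, ∑ y, outVal (s x y) * corr P x y

lemma xorBias_beq (a : Bool) (s : Fin M → Fin N → Bool) (P : Bool → Bool → Fin M → Fin N → ℝ) :
    xorBias (fun x y => a == s x y) P = outVal a * xorBias s P := by
  simp only [xorBias, outVal_beq, Finset.mul_sum, mul_assoc]

lemma xorBias_linearComb (s : Fin M → Fin N → Bool) (c d : ℝ)
    (P Q : Bool → Bool → Fin M → Fin N → ℝ) :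
    xorBias s (fun a b x y => c * P a b x y + d * Q a b x y) =
      c * xorBias s P + d * xorBias s Q := by
  simp only [xorBias, corr, Finset.mul_sum, ← Finset.sum_add_distrib]
  congr! 4
  ring

/-- The probability of the answer pair with Alice's answer `l.1` that loses the game `s` at the
settings `l.2`. -/
def losingProb (s : Fin M → Fin N → Bool) (P : Bool → Bool → Fin M → Fin N → ℝ)
    (l : Bool × Fin M × Fin N) : ℝ :=
  P l.1 (l.1 ^^ s l.2.1 l.2.2) l.2.1 l.2.2

lemma sum_losingProb (s : Fin M → Fin N → Bool) (hP : IsBehaviour P) :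
    ∑ l, losingProb s P l = (M * N - xorBias s P) / 2 := by
  have hxy : ∀ x y, ∑ a, losingProb s P (a, x, y) = (1 - outVal (s x y) * corr P x y) / 2 := by
    intro x y
    have hsum := hP.2 x y
    simp only [corr, losingProb, Fintype.sum_bool] at *
    cases s x y <;> simp only [outVal_true, outVal_false, Bool.xor_true, Bool.xor_false,
      Bool.not_true, Bool.not_false] <;> linarith
  rw [Fintype.sum_prod_type, Finset.sum_comm, Fintype.sum_prod_type]
  simp only [hxy, ← Finset.sum_div, Finset.sum_sub_distrib, xorBias]
  simp

lemma xorBias_le_mul (s : Fin M → Fin N → Bool) (hP : IsBehaviour P) : xorBias s P ≤ M * N := by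
  have hnonneg : 0 ≤ ∑ l, losingProb s P l := Finset.sum_nonneg fun l _ => hP.1 _ _ _ _
  linarith [sum_losingProb s hP]

lemma corr_localBox {Λ : Type*} [Fintype Λ] (q : Λ → ℝ) (A : Bool → Fin M → Λ → ℝ)
    (B : Bool → Fin N → Λ → ℝ) (x : Fin M) (y : Fin N) :
    corr (localBox q A B) x y = ∑ l, q l * (responseMean A x l * responseMean B y l) := by
  simp only [corr, localBox, responseMean, Fintype.sum_bool, Finset.mul_sum,
    ← Finset.sum_add_distrib]
  exact Finset.sum_congr rfl fun l _ => by ring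

lemma xorBias_localBox {Λ : Type*} [Fintype Λ] (s : Fin M → Fin N → Bool) (q : Λ → ℝ)
    (A : Bool → Fin M → Λ → ℝ) (B : Bool → Fin N → Λ → ℝ) :
    xorBias s (localBox q A B) = ∑ l, q l * ∑ x, ∑ y,
      outVal (s x y) * (responseMean A x l * responseMean B y l) := by
  simp only [xorBias, corr_localBox, Finset.mul_sum]
  rw [Finset.sum_comm_cycle]
  congr! 3
  ring

end XorGames

section Chsh

variable {P Q : Bool → Bool → Fin 2 → Fin 2 → ℝ} {s : Fin 2 → Fin 2 → Bool}

/-- Sign patterns with an odd number of minus signs, those of the expressions `±S_i`. -/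
def OddPattern (s : Fin 2 → Fin 2 → Bool) : Prop :=
  (s 0 0 ^^ s 0 1 ^^ s 1 0 ^^ s 1 1) = true

/-- The sign pattern whose only minus sign is at `(x₀, y₀)`. -/
def loneMinus (x₀ y₀ x y : Fin 2) : Bool :=
  !(x == x₀ && y == y₀)

lemma oddPattern_iff_exists_loneMinus :
    OddPattern s ↔ ∃ a x₀ y₀, s = fun x y => a == loneMinus x₀ y₀ x y := by
  revert s
  unfold OddPattern
  decide

lemma Smax_eq_max_xorBias (P : Bool → Bool → Fin 2 → Fin 2 → ℝ) :
    Smax P = max (max |xorBias (loneMinus 1 1) P| |xorBias (loneMinus 1 0) P|)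
      (max |xorBias (loneMinus 0 1) P| |xorBias (loneMinus 0 0) P|) := by
  have h₁ : S1 P = xorBias (loneMinus 1 1) P := by simp [S1, xorBias, loneMinus]; ring
  have h₂ : S2 P = xorBias (loneMinus 1 0) P := by simp [S2, xorBias, loneMinus]; ring
  have h₃ : S3 P = xorBias (loneMinus 0 1) P := by simp [S3, xorBias, loneMinus]; ring
  have h₄ : S4 P = xorBias (loneMinus 0 0) P := by simp [S4, xorBias, loneMinus]; ring
  rw [Smax, h₁, h₂, h₃, h₄]

lemma isGreatest_xorBias_Smax (P : Bool → Bool → Fin 2 → Fin 2 → ℝ) :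
    IsGreatest ((xorBias · P) '' {s | OddPattern s}) (Smax P) := by
  constructor
  · obtain ⟨x₀, y₀, hmax⟩ : ∃ x₀ y₀, Smax P = |xorBias (loneMinus x₀ y₀) P| := by
      rw [Smax_eq_max_xorBias]
      simp only [max_def]
      split_ifs <;> exact ⟨_, _, rfl⟩
    obtain ⟨a, ha⟩ := exists_outVal_mul_eq_abs (xorBias (loneMinus x₀ y₀) P)
    exact ⟨_, oddPattern_iff_exists_loneMinus.2 ⟨a, x₀, y₀, rfl⟩,
      (xorBias_beq a _ P).trans (ha.trans hmax.symm)⟩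
  · rintro _ ⟨s, hs, rfl⟩
    obtain ⟨a, x₀, y₀, rfl⟩ := oddPattern_iff_exists_loneMinus.1 hs
    calc xorBias (fun x y => a == loneMinus x₀ y₀ x y) P
        = outVal a * xorBias (loneMinus x₀ y₀) P := xorBias_beq a _ P
      _ ≤ |outVal a * xorBias (loneMinus x₀ y₀) P| := le_abs_self _
      _ = |xorBias (loneMinus x₀ y₀) P| := by rw [abs_mul, abs_outVal, one_mul]
      _ ≤ Smax P := by
        rw [Smax_eq_max_xorBias]
        fin_cases x₀ <;> fin_cases y₀ <;> simp

lemma sum_outVal_mul_mul_le_two (hs : OddPattern s) {α β : Fin 2 → ℝ} (hα : ∀ x, |α x| ≤ 1)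
    (hβ : ∀ y, |β y| ≤ 1) : ∑ x, ∑ y, outVal (s x y) * (α x * β y) ≤ 2 := by
  have hmul : ∀ x (t : ℝ), α x * t ≤ |t| := fun x t =>
    (le_abs_self _).trans ((abs_mul _ _).trans_le (mul_le_of_le_one_left (abs_nonneg t) (hα x)))
  have hβ' := fun y => abs_le.1 (hβ y)
  -- By oddness, one of the two inner sums is `± (β 0 + β 1)` and the other `± (β 0 - β 1)`.
  have hsum : |∑ y, outVal (s 0 y) * β y| + |∑ y, outVal (s 1 y) * β y| ≤ 2 := by
    obtain ⟨a, ha⟩ := exists_outVal_mul_eq_abs (∑ y, outVal (s 0 y) * β y)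
    obtain ⟨b, hb⟩ := exists_outVal_mul_eq_abs (∑ y, outVal (s 1 y) * β y)
    rw [← ha, ← hb, Fin.sum_univ_two, Fin.sum_univ_two]
    unfold OddPattern at hs
    cases a <;> cases b <;> cases h₀₀ : s 0 0 <;> cases h₀₁ : s 0 1 <;> cases h₁₀ : s 1 0 <;>
      cases h₁₁ : s 1 1 <;> simp [h₀₀, h₀₁, h₁₀, h₁₁] at hs <;>
      simp only [outVal_true, outVal_false] <;>
      linarith [hβ' 0, hβ' 1]
  calc ∑ x, ∑ y, outVal (s x y) * (α x * β y) = ∑ x, α x * ∑ y, outVal (s x y) * β y := by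
        simp only [Finset.mul_sum, mul_left_comm]
    _ ≤ |∑ y, outVal (s 0 y) * β y| + |∑ y, outVal (s 1 y) * β y| := by
        rw [Fin.sum_univ_two]
        exact add_le_add (hmul 0 _) (hmul 1 _)
    _ ≤ 2 := hsum

lemma LocalFree.xorBias_le_two (hP : LocalFree P) (hs : OddPattern s) : xorBias s P ≤ 2 := by
  obtain ⟨n, q, A, B, hq, hA, hB, rfl⟩ := hP.exists_eq_localBox
  calc xorBias s (localBox q A B)
      = ∑ l, q l * ∑ x, ∑ y, outVal (s x y) * (responseMean A x l * responseMean B y l) :=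
        xorBias_localBox s q A B
    _ ≤ ∑ l, q l * 2 := by
        gcongr with l
        · exact hq.1 l
        · exact sum_outVal_mul_mul_le_two hs (hA.abs_responseMean_le_one · l)
            (hB.abs_responseMean_le_one · l)
    _ = 2 := by rw [← Finset.sum_mul, hq.2, one_mul]

/-- The distribution of two `±1` variables with means `α`, `β` and correlator `c`. -/
def pairProb (α β c : ℝ) (a b : Bool) : ℝ :=
  (1 + outVal a * α + outVal b * β + outVal a * outVal b * c) / 4

lemma sum_pairProb_right (α β c : ℝ) (a : Bool) :
    ∑ b, pairProb α β c a b = (1 + outVal a * α) / 2 := by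
  simp only [Fintype.sum_bool, pairProb, outVal_true, outVal_false]
  ring

lemma sum_pairProb_left (α β c : ℝ) (b : Bool) :
    ∑ a, pairProb α β c a b = (1 + outVal b * β) / 2 := by
  simp only [Fintype.sum_bool, pairProb, outVal_true, outVal_false]
  ring

lemma sum_sum_pairProb (α β c : ℝ) : ∑ a, ∑ b, pairProb α β c a b = 1 := by
  simp only [sum_pairProb_right]
  simp only [Fintype.sum_bool, outVal_true, outVal_false]
  ring

lemma pairProb_nonneg_iff {α β c : ℝ} :
    (∀ a b, 0 ≤ pairProb α β c a b) ↔ |α + β| ≤ 1 + c ∧ |α - β| ≤ 1 - c := by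
  simp only [Bool.forall_bool, pairProb, outVal_true, outVal_false, abs_le]
  constructor <;> rintro ⟨⟨h₁, h₂⟩, h₃, h₄⟩ <;> refine ⟨⟨?_, ?_⟩, ?_, ?_⟩ <;> linarith

/-- Alice's mean outcome at the setting `x`, evaluated at Bob's setting `0`. -/
def aliceMean (P : Bool → Bool → Fin 2 → Fin 2 → ℝ) (x : Fin 2) : ℝ :=
  ∑ a, ∑ b, outVal a * P a b x 0

/-- Bob's mean outcome at the setting `y`, evaluated at Alice's setting `0`. -/
def bobMean (P : Bool → Bool → Fin 2 → Fin 2 → ℝ) (y : Fin 2) : ℝ :=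
  ∑ a, ∑ b, outVal b * P a b 0 y

lemma NonSignalling.eq_pairProb (hNS : NonSignalling P) (hP : ∀ x y, ∑ a, ∑ b, P a b x y = 1)
    (a b : Bool) (x y : Fin 2) :
    P a b x y = pairProb (aliceMean P x) (bobMean P y) (corr P x y) a b := by
  have hA := fun a => hNS.1 a x 0 y
  have hB := fun b => hNS.2 b y 0 x
  have h1 := hP x y
  simp only [Bool.forall_bool, Fintype.sum_bool] at hA hB h1
  simp only [pairProb, aliceMean, bobMean, corr, Fintype.sum_bool]
  cases a <;> cases b <;> simp only [outVal_true, outVal_false] <;> linarith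

/-- The distribution of three `±1` variables with the given means, correlators and third
moment `u`. -/
def tripleProb (α α' β τ c c' u : ℝ) (a a' b : Bool) : ℝ :=
  (1 + outVal a * α + outVal a' * α' + outVal b * β + outVal a * outVal a' * τ +
    outVal a * outVal b * c + outVal a' * outVal b * c' + outVal a * outVal a' * outVal b * u) / 8

lemma sum_tripleProb_first (α α' β τ c c' u : ℝ) (a' b : Bool) :
    ∑ a, tripleProb α α' β τ c c' u a a' b = pairProb α' β c' a' b := by
  simp only [Fintype.sum_bool, tripleProb, pairProb, outVal_true, outVal_false]
  ring

lemma sum_tripleProb_second (α α' β τ c c' u : ℝ) (a b : Bool) :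
    ∑ a', tripleProb α α' β τ c c' u a a' b = pairProb α β c a b := by
  simp only [Fintype.sum_bool, tripleProb, pairProb, outVal_true, outVal_false]
  ring

lemma sum_tripleProb_third (α α' β τ c c' u : ℝ) (a a' : Bool) :
    ∑ b, tripleProb α α' β τ c c' u a a' b = pairProb α α' τ a a' := by
  simp only [Fintype.sum_bool, tripleProb, pairProb, outVal_true, outVal_false]
  ring

/-- The last hypothesis is Bell's three-variable inequality `0 ≤ 1 ± c ± c' ± τ`, read as
positivity of the distribution of the products `a b` and `a' b`. -/
lemma exists_tripleProb_nonneg {α α' β τ c c' : ℝ} (h₁₂ : ∀ a a', 0 ≤ pairProb α α' τ a a')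
    (h₁₃ : ∀ a b, 0 ≤ pairProb α β c a b) (h₂₃ : ∀ a' b, 0 ≤ pairProb α' β c' a' b)
    (hBell : ∀ k k', 0 ≤ pairProb c c' τ k k') :
    ∃ u, ∀ a a' b, 0 ≤ tripleProb α α' β τ c c' u a a' b := by
  set T := tripleProb α α' β τ c c' 0 with hT
  have hadd : ∀ u a a' b, tripleProb α α' β τ c c' u a a' b =
      T a a' b + outVal a * outVal a' * outVal b * u / 8 := fun u a a' b => by
    simp only [hT, tripleProb]
    ring
  -- Two sign triples with opposite products differ in exactly one place, where the sum below is a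
  -- pair probability, or in all three places, where it is Bell's inequality.
  have hopp : ∀ i j : Bool × Bool, 0 ≤ T i.1 i.2 (i.1 == i.2) + T j.1 j.2 (j.1 ^^ j.2) := by
    simp only [Bool.forall_bool, pairProb, outVal_true, outVal_false] at h₁₂ h₁₃ h₂₃ hBell
    rintro ⟨a, a'⟩ ⟨d, d'⟩
    simp only [hT, tripleProb, outVal_beq, outVal_xor]
    cases a <;> cases a' <;> cases d <;> cases d' <;> simp only [outVal_true, outVal_false] <;>
      linarith
  obtain ⟨i, hi⟩ := Finite.exists_max fun i : Bool × Bool => -T i.1 i.2 (i.1 == i.2)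
  refine ⟨-8 * T i.1 i.2 (i.1 == i.2), fun a a' b => ?_⟩
  rw [hadd]
  have hlower := hi (a, a')
  have hupper := hopp i (a, a')
  cases a <;> cases a' <;> cases b <;> simp at hlower hupper ⊢ <;> linarith

lemma exists_common_correlator {ι : Type*} [Finite ι] [Nonempty ι] {u v : ι → ℝ}
    (h : ∀ i j, |u i + v i| + |u j - v j| ≤ 2) :
    ∃ τ, ∀ i a b, 0 ≤ pairProb (u i) (v i) τ a b := by
  obtain ⟨i, hi⟩ := Finite.exists_max fun i => |u i + v i|
  exact ⟨|u i + v i| - 1, fun j => pairProb_nonneg_iff.2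
    ⟨by linarith [hi j], by linarith [h i j]⟩⟩

lemma abs_add_add_abs_sub_le_two {u v : ℝ} (hu : |u| ≤ 1) (hv : |v| ≤ 1) :
    |u + v| + |u - v| ≤ 2 := by
  rw [abs_le] at hu hv
  rcases abs_choice (u + v) with h | h <;> rcases abs_choice (u - v) with h' | h' <;> linarith

lemma abs_le_one_of_pairProb_nonneg {α β c : ℝ} (h : ∀ a b, 0 ≤ pairProb α β c a b) :
    |α| ≤ 1 ∧ |c| ≤ 1 := by
  simp only [Bool.forall_bool, pairProb, outVal_true, outVal_false] at h
  constructor <;> rw [abs_le] <;> constructor <;> linarith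

lemma abs_add_add_abs_sub_le_two_of_pairProb_nonneg {α α' β c c' : ℝ}
    (h : ∀ a b, 0 ≤ pairProb α β c a b) (h' : ∀ a b, 0 ≤ pairProb α' β c' a b) :
    |α + α'| + |c - c'| ≤ 2 ∧ |c + c'| + |α - α'| ≤ 2 := by
  simp only [Bool.forall_bool, pairProb, outVal_true, outVal_false] at h h'
  constructor
  · rcases abs_choice (α + α') with hα | hα <;> rcases abs_choice (c - c') with hc | hc <;> linarith
  · rcases abs_choice (c + c') with hc | hc <;> rcases abs_choice (α - α') with hα | hα <;> linarith

lemma abs_corr_add_abs_corr_sub_le_two (h : ∀ s, OddPattern s → xorBias s P ≤ 2) {y y' : Fin 2}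
    (hy : y ≠ y') : |corr P 0 y + corr P 1 y| + |corr P 0 y' - corr P 1 y'| ≤ 2 := by
  obtain ⟨a, ha⟩ := exists_outVal_mul_eq_abs (corr P 0 y + corr P 1 y)
  obtain ⟨b, hb⟩ := exists_outVal_mul_eq_abs (corr P 0 y' - corr P 1 y')
  have hodd := h (fun x z => if z = y then a else if x = 0 then b else !b)
  rw [← ha, ← hb]
  fin_cases y <;> fin_cases y' <;> cases a <;> cases b <;>
    simp [OddPattern, xorBias] at hy hodd ⊢ <;> linarith

lemma localFree_of_xorBias_le_two (hP : IsBehaviour P) (hNS : NonSignalling P)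
    (h : ∀ s, OddPattern s → xorBias s P ≤ 2) : LocalFree P := by
  have hpair := hNS.eq_pairProb hP.2
  have hpos : ∀ x y a b, 0 ≤ pairProb (aliceMean P x) (bobMean P y) (corr P x y) a b :=
    fun x y a b => hpair a b x y ▸ hP.1 a b x y
  have hbound := fun x y => abs_le_one_of_pairProb_nonneg (hpos x y)
  have hcross := fun y => abs_add_add_abs_sub_le_two_of_pairProb_nonneg (hpos 0 y) (hpos 1 y)
  have hcompat : ∀ i j : Option (Fin 2),
      |i.elim (aliceMean P 0) (corr P 0) + i.elim (aliceMean P 1) (corr P 1)| +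
        |j.elim (aliceMean P 0) (corr P 0) - j.elim (aliceMean P 1) (corr P 1)| ≤ 2 := by
    rintro (_ | y) (_ | y')
    · exact abs_add_add_abs_sub_le_two (hbound 0 0).1 (hbound 1 0).1
    · exact (hcross y').1
    · exact (hcross y).2
    · rcases eq_or_ne y y' with rfl | hy
      · exact abs_add_add_abs_sub_le_two (hbound 0 y).2 (hbound 1 y).2
      · exact abs_corr_add_abs_corr_sub_le_two h hy
  obtain ⟨τ, hτ⟩ := exists_common_correlator hcompat
  choose u hu using fun y => exists_tripleProb_nonneg (hτ none) (hpos 0 y) (hpos 1 y) (hτ (some y))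
  refine localFree_of_joint (Λ := Bool × Bool)
    (q := fun l => pairProb (aliceMean P 0) (aliceMean P 1) τ l.1 l.2)
    (A := detResponse fun x l => ![l.1, l.2] x)
    (r := fun y l => tripleProb (aliceMean P 0) (aliceMean P 1) (bobMean P y) τ (corr P 0 y)
      (corr P 1 y) (u y) l.1 l.2)
    ⟨fun l => hτ none l.1 l.2, ?_⟩ (isResponse_detResponse _) (fun y l => hu y l.1 l.2)
    (fun y l => sum_tripleProb_third ..) fun a b x y => ?_
  · rw [Fintype.sum_prod_type, sum_sum_pairProb]
  · rw [hpair]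
    fin_cases x
    · exact (sum_tripleProb_second (aliceMean P 0) (aliceMean P 1) (bobMean P y) τ (corr P 0 y)
        (corr P 1 y) (u y) a b).symm.trans
          (by cases a <;> simp [detResponse, Fintype.sum_prod_type])
    · exact (sum_tripleProb_first (aliceMean P 0) (aliceMean P 1) (bobMean P y) τ (corr P 0 y)
        (corr P 1 y) (u y) a b).symm.trans (by simp [detResponse, Fintype.sum_prod_type])

/-- The PR box that wins the XOR game `s` with certainty. -/
def prBox {M N : ℕ} (s : Fin M → Fin N → Bool) (a b : Bool) (x : Fin M) (y : Fin N) : ℝ :=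
  pairProb 0 0 (outVal (s x y)) a b

lemma isBehaviour_prBox {M N : ℕ} (s : Fin M → Fin N → Bool) : IsBehaviour (prBox s) := by
  refine ⟨fun a b x y => ?_, fun x y => sum_sum_pairProb ..⟩
  cases a <;> cases b <;> cases h : s x y <;> norm_num [prBox, pairProb, h]

lemma nonSignalling_prBox (s : Fin 2 → Fin 2 → Bool) : NonSignalling (prBox s) :=
  ⟨fun a x y y' => by simp only [prBox, sum_pairProb_right],
    fun b y x x' => by simp only [prBox, sum_pairProb_left]⟩

lemma losingProb_prBox {M N : ℕ} (s : Fin M → Fin N → Bool) (l : Bool × Fin M × Fin N) :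
    losingProb s (prBox s) l = 0 := by
  obtain ⟨a, x, y⟩ := l
  cases a <;> cases h : s x y <;> norm_num [losingProb, prBox, pairProb, h]

lemma NonSignalling.linearComb (hP : NonSignalling P) (hQ : NonSignalling Q) (c d : ℝ) :
    NonSignalling fun a b x y => c * P a b x y + d * Q a b x y := by
  constructor
  · intro a x y y'
    simp only [Finset.sum_add_distrib, ← Finset.mul_sum, hP.1 a x y y', hQ.1 a x y y']
  · intro b y x x'
    simp only [Finset.sum_add_distrib, ← Finset.mul_sum, hP.2 b y x x', hQ.2 b y x x']

lemma NonSignalling.eq_of_losingProb_eq (hs : OddPattern s) (hP : NonSignalling P)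
    (hQ : NonSignalling Q) (hP1 : ∀ x y, ∑ a, ∑ b, P a b x y = 1)
    (hQ1 : ∀ x y, ∑ a, ∑ b, Q a b x y = 1) (h : ∀ l, losingProb s P l = losingProb s Q l) :
    P = Q := by
  have hlose : ∀ a x y, outVal a * aliceMean P x - outVal a * outVal (s x y) * bobMean P y -
        outVal (s x y) * corr P x y =
      outVal a * aliceMean Q x - outVal a * outVal (s x y) * bobMean Q y -
        outVal (s x y) * corr Q x y := fun a x y => by
    have hl := h (a, x, y)
    simp only [losingProb, hP.eq_pairProb hP1, hQ.eq_pairProb hQ1, pairProb, outVal_xor] at hl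
    cases a <;> simp only [outVal_true, outVal_false] at hl ⊢ <;> linarith
  have hcorr : ∀ x y, corr P x y = corr Q x y := fun x y => by
    have h₁ := hlose true x y
    have h₂ := hlose false x y
    cases hxy : s x y <;> simp only [hxy, outVal_true, outVal_false] at h₁ h₂ <;> linarith
  have hcycle : ∀ x y, aliceMean P x - aliceMean Q x =
      outVal (s x y) * (bobMean P y - bobMean Q y) := fun x y => by
    have h₁ := hlose true x y
    rw [hcorr, outVal_true] at h₁
    linarith
  have hmeans : (∀ x, aliceMean P x = aliceMean Q x) ∧ ∀ y, bobMean P y = bobMean Q y := by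
    simp only [Fin.forall_fin_two] at hcycle ⊢
    unfold OddPattern at hs
    cases h₀₀ : s 0 0 <;> cases h₀₁ : s 0 1 <;> cases h₁₀ : s 1 0 <;> cases h₁₁ : s 1 1 <;>
      simp [h₀₀, h₀₁, h₁₀, h₁₁] at hs hcycle <;> (refine ⟨⟨?_, ?_⟩, ?_, ?_⟩) <;> linarith
  funext a b x y
  rw [hP.eq_pairProb hP1, hQ.eq_pairProb hQ1, hmeans.1, hmeans.2, hcorr]

/-- Alice's answers in the deterministic strategy losing the game `s` only at the settings `l.2`,
where she answers `l.1`. -/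
def soleLossAlice (s : Fin 2 → Fin 2 → Bool) (x : Fin 2) (l : Bool × Fin 2 × Fin 2) : Bool :=
  if x = l.2.1 then l.1 else (l.1 ^^ s l.2.1 l.2.2) == s x l.2.2

/-- Bob's answers in the deterministic strategy losing the game `s` only at the settings `l.2`,
where Alice answers `l.1`. -/
def soleLossBob (s : Fin 2 → Fin 2 → Bool) (y : Fin 2) (l : Bool × Fin 2 × Fin 2) : Bool :=
  if y = l.2.2 then l.1 ^^ s l.2.1 l.2.2 else l.1 == s l.2.1 y

lemma soleLoss_loses_iff (hs : OddPattern s) (l : Bool × Fin 2 × Fin 2) (a : Bool) (x y : Fin 2) :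
    soleLossAlice s x l = a ∧ soleLossBob s y l = (a ^^ s x y) ↔ l = (a, x, y) := by
  revert s l a x y
  unfold OddPattern soleLossAlice soleLossBob
  decide

/-- The local model drawing one of the deterministic strategies with a sole loss with
probabilities `q`. -/
def soleLossBox (s : Fin 2 → Fin 2 → Bool) (q : Bool × Fin 2 × Fin 2 → ℝ) :
    Bool → Bool → Fin 2 → Fin 2 → ℝ :=
  localBox q (detResponse (soleLossAlice s)) (detResponse (soleLossBob s))

lemma localFree_soleLossBox {q : Bool × Fin 2 × Fin 2 → ℝ} (hq : q ∈ stdSimplex ℝ _) :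
    LocalFree (soleLossBox s q) :=
  localFree_localBox hq (isResponse_detResponse _) (isResponse_detResponse _)

lemma losingProb_soleLossBox (hs : OddPattern s) (q : Bool × Fin 2 × Fin 2 → ℝ)
    (l : Bool × Fin 2 × Fin 2) : losingProb s (soleLossBox s q) l = q l := by
  simp only [losingProb, soleLossBox, localBox, detResponse, mul_assoc, ite_zero_mul_ite_zero,
    soleLoss_loses_iff hs]
  simp

lemma exists_eq_soleLossBox_add_prBox (hs : OddPattern s) (hP : IsBehaviour P)
    (hNS : NonSignalling P) : ∃ q ∈ stdSimplex ℝ (Bool × Fin 2 × Fin 2),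
      P = fun a b x y => (4 - xorBias s P) / 2 * soleLossBox s q a b x y +
        (1 - (4 - xorBias s P) / 2) * prBox s a b x y := by
  obtain ⟨q, hq, hqP⟩ := exists_mem_stdSimplex_sum_mul_eq (w := losingProb s P)
    fun l => hP.1 _ _ _ _
  have hweight : ∑ l, losingProb s P l = (4 - xorBias s P) / 2 := by
    rw [sum_losingProb s hP]; norm_num
  rw [hweight] at hqP
  have hL := localFree_soleLossBox (s := s) hq
  refine ⟨q, hq, hNS.eq_of_losingProb_eq hs
    (hL.nonSignalling.linearComb (nonSignalling_prBox s) _ _) hP.2 (fun x y => ?_) fun l => ?_⟩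
  · simp only [Finset.sum_add_distrib, ← Finset.mul_sum, hL.isBehaviour.2 x y,
      (isBehaviour_prBox s).2 x y]
    ring
  · calc losingProb s P l
        = (4 - xorBias s P) / 2 * losingProb s (soleLossBox s q) l +
            (1 - (4 - xorBias s P) / 2) * losingProb s (prBox s) l := by
          rw [losingProb_soleLossBox hs, losingProb_prBox, hqP, mul_zero, add_zero]
      _ = _ := rfl

/-- The weights of local-free behaviours in decompositions of `P`; the supremum of this set is the
local fraction of `P`. -/
def localWeights {M N : ℕ} (P : Bool → Bool → Fin M → Fin N → ℝ) : Set ℝ :=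
  {p : ℝ | p ∈ Set.Icc (0 : ℝ) 1 ∧
    ∃ PL Q : Bool → Bool → Fin M → Fin N → ℝ,
      IsBehaviour PL ∧ LocalFree PL ∧ IsBehaviour Q ∧
      ∀ a b x y, P a b x y = p * PL a b x y + (1 - p) * Q a b x y}

lemma LocalFree.one_mem_localWeights {M N : ℕ} {P : Bool → Bool → Fin M → Fin N → ℝ}
    (h : LocalFree P) : 1 ∈ localWeights P :=
  ⟨by simp, P, P, h.isBehaviour, h, h.isBehaviour, fun a b x y => by ring⟩

lemma le_of_mem_localWeights (hs : OddPattern s) {p : ℝ} (hp : p ∈ localWeights P) :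
    p ≤ (4 - xorBias s P) / 2 := by
  obtain ⟨⟨hp0, hp1⟩, L, Q, -, hL, hQ, hPLQ⟩ := hp
  obtain rfl : P = fun a b x y => p * L a b x y + (1 - p) * Q a b x y := by
    funext a b x y
    exact hPLQ a b x y
  have hbias : p * xorBias s L + (1 - p) * xorBias s Q ≤ p * 2 + (1 - p) * 4 := by
    gcongr
    · exact hL.xorBias_le_two hs
    · exact (xorBias_le_mul s hQ).trans_eq (by norm_num)
  rw [xorBias_linearComb]
  linarith

lemma mem_localWeights_of_two_le_xorBias (hP : IsBehaviour P) (hNS : NonSignalling P)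
    (hs : OddPattern s) (h : 2 ≤ xorBias s P) : (4 - xorBias s P) / 2 ∈ localWeights P := by
  obtain ⟨q, hq, hPq⟩ := exists_eq_soleLossBox_add_prBox hs hP hNS
  have hbias := xorBias_le_mul s hP
  have hL := localFree_soleLossBox (s := s) hq
  norm_num at hbias
  exact ⟨⟨by linarith, by linarith⟩, soleLossBox s q, prBox s, hL.isBehaviour, hL,
    isBehaviour_prBox s, fun a b x y => congr_fun₂ (congr_fun₂ hPq a b) x y⟩

end Chsh

theorem tsirelson_local_fraction_general (P : Bool → Bool → Fin 2 → Fin 2 → ℝ)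
    (hP : IsBehaviour P) (hNS : NonSignalling P) :
    IsGreatest (localWeights P) (min 1 ((4 - Smax P) / 2)) := by
  obtain ⟨⟨s, hs, hmax⟩, hle⟩ := isGreatest_xorBias_Smax P
  refine ⟨?_, fun p hp => le_min hp.1.2 (hmax ▸ le_of_mem_localWeights hs hp)⟩
  rcases le_total (Smax P) 2 with h | h
  · have hlocal : LocalFree P :=
      localFree_of_xorBias_le_two hP hNS fun t ht => (hle ⟨t, ht, rfl⟩).trans h
    rw [min_eq_left (by linarith)]
    exact hlocal.one_mem_localWeights
  · rw [min_eq_right (by linarith), ← hmax]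
    exact mem_localWeights_of_two_le_xorBias hP hNS hs (h.trans_eq hmax.symm)

theorem tsirelson_local_fraction (P : Bool → Bool → Fin 2 → Fin 2 → ℝ)
    (hP : IsBehaviour P) (hNS : NonSignalling P)
    (hS : Smax P ≤ 2 * Real.sqrt 2) :
    2 - Real.sqrt 2 ≤ sSup {p : ℝ | p ∈ Set.Icc (0 : ℝ) 1 ∧
      ∃ PL Q : Bool → Bool → Fin 2 → Fin 2 → ℝ,
        IsBehaviour PL ∧ LocalFree PL ∧ IsBehaviour Q ∧
        ∀ a b x y, P a b x y = p * PL a b x y + (1 - p) * Q a b x y} ∧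
    (Smax P = 2 * Real.sqrt 2 →
      sSup {p : ℝ | p ∈ Set.Icc (0 : ℝ) 1 ∧
        ∃ PL Q : Bool → Bool → Fin 2 → Fin 2 → ℝ,
          IsBehaviour PL ∧ LocalFree PL ∧ IsBehaviour Q ∧
          ∀ a b x y, P a b x y = p * PL a b x y + (1 - p) * Q a b x y}
        = 2 - Real.sqrt 2) := by
  have hsup := (tsirelson_local_fraction_general P hP hNS).csSup_eq
  have hsqrt : 1 ≤ Real.sqrt 2 := Real.one_le_sqrt.2 one_le_two
  exact ⟨(le_min (by linarith) (by linarith)).trans_eq hsup.symm,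
    fun hmax => hsup.trans ((min_eq_right (by linarith)).trans (by rw [hmax]; ring))⟩
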